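/- Let g be a finite-dimensional semisimple complex Lie algebra with a Z/3Z-grading g = g_0 ⊕ g_1 ⊕ g_2 such that g_0 is a Cartan subalgebra of g. Then g is not isomorphic to the semisimple Lie algebra of type B_2 ⊕ A_2 ⊕ A_1 ⊕ A_1. (Equivalently: if a semisimple Lie algebra admits a Z/3Z-grading whose degree-zero part is a Cartan subalgebra, then no simple component of type B_2 can occur.) -/

import Mathlib

/-!
A root space of `g` is one-dimensional and stable under the projections onto the graded pieces,
hence homogeneous; its degree is nonzero because `g₀` is the Cartan subalgebra. Degrees are additive
on roots. If `⟨β, α⟩ ≤ -2` for roots `β ≠ -α`, then `β`, `β + α` and `β + 2α` are roots, of degrees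
`b`, `b + a` and `b + 2a`; as `a ≠ 0` these exhaust `ℤ/3ℤ`, so one of them vanishes, which is
impossible. Hence the root system is simply laced. The grading restricts to every ideal, so the same
holds for ideals, while `sp₄` has dimension `10` and no simply laced root system satisfies
`rank + #roots = 10`.
-/

open LieAlgebra

/-- The direct product of two Lie rings, with componentwise bracket. -/
instance prodLieRing {A B : Type*} [LieRing A] [LieRing B] : LieRing (A × B) where
  bracket x y := (⁅x.1, y.1⁆, ⁅x.2, y.2⁆)
  add_lie x y z := Prod.ext (add_lie x.1 y.1 z.1) (add_lie x.2 y.2 z.2)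
  lie_add x y z := Prod.ext (lie_add x.1 y.1 z.1) (lie_add x.2 y.2 z.2)
  lie_self x := Prod.ext (lie_self x.1) (lie_self x.2)
  leibniz_lie x y z := Prod.ext (leibniz_lie x.1 y.1 z.1) (leibniz_lie x.2 y.2 z.2)

/-- The direct product of two Lie algebras. -/
instance prodLieAlgebra {R A B : Type*} [CommRing R] [LieRing A] [LieRing B]
    [LieAlgebra R A] [LieAlgebra R B] : LieAlgebra R (A × B) where
  lie_smul t x y := Prod.ext (lie_smul t x.1 y.1) (lie_smul t x.2 y.2)

section SimplyLaced

variable {ι R M N : Type*} [CommRing R] [CharZero R] [AddCommGroup M] [Module R M]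
  [AddCommGroup N] [Module R N]

/-- A root pairing is simply laced if roots in the same irreducible component have the same length.
As the roots carry no preferred form here, this is encoded as symmetry of the pairing
`⟨α, β⟩ = 2 (α, β) / (β, β)`, a condition that is void on orthogonal roots. -/
def IsSimplyLaced (P : RootPairing ι R M N) : Prop :=
  ∀ i j, P.pairing i j = P.pairing j i

variable {P : RootPairing ι R M N} [P.IsCrystallographic]

theorem isSimplyLaced_iff_pairingIn_comm :
    IsSimplyLaced P ↔ ∀ i j, P.pairingIn ℤ i j = P.pairingIn ℤ j i := by
  simp only [IsSimplyLaced, ← P.algebraMap_pairingIn ℤ, (algebraMap ℤ R).injective_int.eq_iff]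

variable [Finite ι] [IsDomain R] [P.IsReduced]

theorem isSimplyLaced_of_neg_one_le_pairingIn
    (h : ∀ i j, P.root i ≠ -P.root j → -1 ≤ P.pairingIn ℤ i j) : IsSimplyLaced P := by
  have : Module.IsReflexive R M := .of_isPerfPair P.toLinearMap
  have : Module.IsReflexive R N := .of_isPerfPair P.flip.toLinearMap
  refine isSimplyLaced_iff_pairingIn_comm.2 fun i j => ?_
  obtain rfl | hne := eq_or_ne i j
  · rfl
  obtain hneg | hneg := eq_or_ne (P.root i) (-P.root j)
  · simp [(P.pairingIn_neg_two_neg_two_iff ℤ i j).2 hneg]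
  let := P.indexNeg
  have hmem := P.pairingIn_pairingIn_mem_set_of_isCrystal_of_isRed' i j (by simpa) hneg
  have hij := h i j hneg
  have hji := h j i fun hroot => hneg (by rw [hroot, neg_neg])
  have hnegi := h (-i) j (by simpa)
  have hnegj := h (-j) i (by simpa using hne.symm)
  rw [RootPairing.indexNeg_neg, P.pairingIn_reflectionPerm_self_left] at hnegi hnegj
  simp only [Set.mem_insert_iff, Set.mem_singleton_iff, Prod.mk.injEq] at hmem
  omega

theorem isSimplyLaced_of_zmod_three_degree (d : ι → ZMod 3) (hd : ∀ i, d i ≠ 0)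
    (hadd : ∀ i j k, P.root k = P.root i + P.root j → d k = d i + d j) : IsSimplyLaced P := by
  refine isSimplyLaced_of_neg_one_le_pairingIn fun i j hij => ?_
  by_contra! hlt
  have hne : i ≠ j := by
    rintro rfl
    simp at hlt
  have hli : LinearIndependent R ![P.root j, P.root i] :=
    RootPairing.IsReduced.linearIndependent P hne.symm fun h => hij (by rw [h, neg_neg])
  have hchain : 2 ≤ P.chainTopCoeff j i := by
    have := P.chainBotCoeff_sub_chainTopCoeff hli
    omega
  obtain ⟨k, hk⟩ := (P.root_add_nsmul_mem_range_iff_le_chainTopCoeff hli).2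
    (one_le_two.trans hchain)
  obtain ⟨l, hl⟩ := (P.root_add_nsmul_mem_range_iff_le_chainTopCoeff hli).2 hchain
  have hdk : d k = d i + d j := hadd i j k (by rw [hk, one_smul])
  have hdl : d l = d k + d j := hadd k j l (by rw [hl, hk, one_smul, two_smul, add_assoc])
  have exhaust : ∀ a b : ZMod 3, a ≠ 0 → b ≠ 0 → b + a ≠ 0 → b + a + a = 0 := by decide
  exact hd l (hdl ▸ hdk ▸ exhaust _ _ (hd j) (hd i) (hdk ▸ hd k))

namespace IsSimplyLaced

omit [Finite ι] [IsDomain R] [P.IsReduced] in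
theorem sq_add_mul_add_sq_eq_one (h : IsSimplyLaced P) {i j k : ι} {x y : ℤ}
    (hk : P.root k = x • P.root i + y • P.root j) :
    x ^ 2 + P.pairingIn ℤ i j * x * y + y ^ 2 = 1 := by
  have expand (l : ι) : P.pairing k l = x * P.pairing i l + y * P.pairing j l := by
    rw [← P.root_coroot_eq_pairing, hk]
    simp
  have hki := expand i
  have hkj := expand j
  have hkk := expand k
  rw [P.pairing_same] at hki hkj hkk
  rw [h i k, h j k, hki, hkj, h j i, ← P.algebraMap_pairingIn ℤ] at hkk
  refine mul_left_cancel₀ two_ne_zero (?_ : (2 : ℤ) * _ = 2 * 1)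
  rw [← (algebraMap ℤ R).injective_int.eq_iff]
  simp only [algebraMap_int_eq, eq_intCast] at hkk ⊢
  push_cast
  linear_combination -hkk

omit [P.IsReduced] in
theorem neg_one_le_pairingIn (h : IsSimplyLaced P) {i j : ι} (hij : P.root i ≠ -P.root j) :
    -1 ≤ P.pairingIn ℤ i j := by
  have : Module.IsReflexive R M := .of_isPerfPair P.toLinearMap
  have : Module.IsReflexive R N := .of_isPerfPair P.flip.toLinearMap
  have hmem := P.pairingIn_pairingIn_mem_set_of_isCrystallographic i j
  rw [← isSimplyLaced_iff_pairingIn_comm.1 h i j] at hmem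
  have hne : P.pairingIn ℤ i j ≠ -2 := fun hp =>
    hij <| (P.pairingIn_neg_two_neg_two_iff ℤ i j).1
      ⟨hp, isSimplyLaced_iff_pairingIn_comm.1 h i j ▸ hp⟩
  simp only [Set.mem_insert_iff, Set.mem_singleton_iff, Prod.mk.injEq] at hmem
  omega

end IsSimplyLaced

end SimplyLaced

section Base

variable {ι R M N : Type*} [CommRing R] [AddCommGroup M] [Module R M]
  [AddCommGroup N] [Module R N] {P : RootPairing ι R M N}

theorem card_eq_two_mul_ncard_isPos [CharZero R] [Finite ι] (b : P.Base) :
    Nat.card ι = 2 * {i | b.IsPos i}.ncard := by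
  let := P.indexNeg
  have hcompl : {i | b.IsPos i}ᶜ = Neg.neg '' {i | b.IsPos i} := by
    ext i
    rw [Set.image_neg_eq_neg, Set.mem_neg]
    exact (RootPairing.Base.IsPos.neg_iff_not b i).symm
  rw [← Set.ncard_add_ncard_compl {i | b.IsPos i}, hcompl,
    Set.ncard_image_of_injective _ neg_injective, two_mul]

theorem card_support_eq_finrank [Finite ι] [Nontrivial R] [P.IsRootSystem] (b : P.Base) :
    b.support.card = Module.finrank R M := by
  rw [← P.ncard_eq_finrank_of_linearIndepOn_of b.linearIndepOn_root b.root_mem_or_neg_mem,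
    Set.ncard_coe_finset]

theorem card_support_le_ncard_isPos [CharZero R] [Finite ι] (b : P.Base) :
    b.support.card ≤ {i | b.IsPos i}.ncard := by
  rw [← Set.ncard_coe_finset]
  exact Set.ncard_le_ncard fun i => RootPairing.Base.isPos_of_mem_support

end Base

theorem ncard_le_six_of_sq_add_mul_add_sq_eq_one {c : ℤ} (hc : c ∈ Set.Icc (-1) 0)
    {s : Set (ℤ × ℤ)} (hs : ∀ v ∈ s, v.1 ^ 2 + c * v.1 * v.2 + v.2 ^ 2 = 1) :
    s.ncard ≤ 6 := by
  let B : Finset (ℤ × ℤ) := {v ∈ Finset.Icc (-1) 1 ×ˢ Finset.Icc (-1) 1 |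
    v.1 ^ 2 + c * v.1 * v.2 + v.2 ^ 2 = 1}
  have hsB : s ⊆ B := fun v hv => by
    have := hs v hv
    simp only [B, Finset.coe_filter, Finset.mem_product, Finset.mem_Icc, Set.mem_ofPred_eq,
      ← abs_le, ← sq_le_one_iff_abs_le_one, this, and_true]
    obtain ⟨hc₁, hc₀⟩ := hc
    constructor <;> interval_cases c <;>
      nlinarith [sq_nonneg (v.1 - 2 * v.2), sq_nonneg (2 * v.1 - v.2)]
  have hB : B.card ≤ 6 := by
    obtain ⟨hc₁, hc₀⟩ := hc
    obtain rfl | rfl : c = -1 ∨ c = 0 := by omega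
    · decide
    · decide
  exact (Set.ncard_le_ncard hsB B.finite_toSet).trans (by rwa [Set.ncard_coe_finset])

namespace IsSimplyLaced

variable {ι 𝕜 M N : Type*} [Finite ι] [Field 𝕜] [CharZero 𝕜] [AddCommGroup M] [Module 𝕜 M]
  [AddCommGroup N] [Module 𝕜 N] {P : RootPairing ι 𝕜 M N} [P.IsRootSystem] [P.IsCrystallographic]
  [P.IsReduced]

theorem card_le_six_of_finrank_eq_two (h : IsSimplyLaced P)
    (hM : Module.finrank 𝕜 M = 2) : Nat.card ι ≤ 6 := by
  classical
  obtain ⟨b⟩ := P.nonempty_base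
  obtain ⟨i, j, hij, hsupp⟩ := Finset.card_eq_two.1 ((card_support_eq_finrank b).trans hM)
  have hi : i ∈ b.support := by simp [hsupp]
  have hj : j ∈ b.support := by simp [hsupp]
  have hc : P.pairingIn ℤ i j ∈ Set.Icc (-1) 0 :=
    ⟨h.neg_one_le_pairingIn (b.root_ne_neg_of_ne hi hj hij), b.pairingIn_le_zero_of_ne hij hi hj⟩
  have hexp (k : ι) : ∃ v : ℤ × ℤ, P.root k = v.1 • P.root i + v.2 • P.root j := by
    obtain ⟨f, -, -, hf⟩ := b.exists_root_eq_sum_int k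
    exact ⟨(f i, f j), by rw [hf, hsupp, Finset.sum_pair hij]⟩
  choose v hv using hexp
  have hinj : Function.Injective v := fun k l hkl => P.root.injective (by rw [hv k, hv l, hkl])
  rw [← Set.ncard_univ, ← Set.ncard_image_of_injective _ hinj]
  refine ncard_le_six_of_sq_add_mul_add_sq_eq_one hc ?_
  rintro _ ⟨k, -, rfl⟩
  exact h.sq_add_mul_add_sq_eq_one (hv k)

theorem finrank_add_card_ne_ten (h : IsSimplyLaced P) :
    Module.finrank 𝕜 M + Nat.card ι ≠ 10 := by
  intro hsum
  obtain ⟨b⟩ := P.nonempty_base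
  have heven := card_eq_two_mul_ncard_isPos b
  have hrank := card_support_eq_finrank b
  have hle := card_support_le_ncard_isPos b
  have htwo := h.card_le_six_of_finrank_eq_two
  have hpos : 0 < Module.finrank 𝕜 M := by
    have : Nonempty ι := Nat.card_pos_iff.1 (by omega) |>.1
    exact hrank ▸ b.support_nonempty.card_pos
  -- The rank is even, positive and at most `10 / 3`, hence `2`; that leaves `8 > 6` roots.
  omega

end IsSimplyLaced

theorem isInternal_comap {ι R M N : Type*} [DecidableEq ι] [Ring R] [AddCommGroup M]
    [Module R M] [AddCommGroup N] [Module R N] {g : ι → Submodule R M}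
    (hg : DirectSum.IsInternal g) {f : N →ₗ[R] M} (hf : Function.Injective f)
    (hrange : f.range ≤ ⨆ i, f.range ⊓ g i) : DirectSum.IsInternal fun i => (g i).comap f := by
  rw [DirectSum.isInternal_submodule_iff_iSupIndep_and_iSup_eq_top]
  constructor
  · refine fun i => Submodule.disjoint_def.2 fun x hx hx' => hf ?_
    rw [map_zero]
    refine Submodule.disjoint_def.1 (hg.submodule_iSupIndep i) (f x) hx ?_
    have := Submodule.mem_map_of_mem (f := f) hx'
    simp only [Submodule.map_iSup] at this
    exact iSup₂_mono (fun j _ => Submodule.map_comap_le _ _) this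
  · refine Submodule.map_injective_of_injective hf ?_
    simp only [Submodule.map_iSup, Submodule.map_comap_eq, Submodule.map_top]
    exact le_antisymm (iSup_le fun i => inf_le_left) hrange

/-- The Lie algebra grading given by an internal direct sum decomposition whose pieces multiply
according to their degrees; the projections onto the pieces are obtained by choice. -/
noncomputable abbrev gradedLieAlgebraOfIsInternal {A R L : Type*} [DecidableEq A]
    [AddCommMonoid A] [CommRing R] [LieRing L] [LieAlgebra R L] {g : A → Submodule R L}
    (hg : DirectSum.IsInternal g) (hlie : ∀ i j, ∀ x ∈ g i, ∀ y ∈ g j, ⁅x, y⁆ ∈ g (i + j)) :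
    GradedLieAlgebra g :=
  { hg.chooseDecomposition with bracket_mem := fun i j x y hx hy => hlie i j x hx y hy }

section GradedModule

variable {A 𝕜 L : Type*} [DecidableEq A] [AddCommMonoid A] [CommRing 𝕜] [LieRing L]
  [LieAlgebra 𝕜 L] (g : A → Submodule 𝕜 L) [GradedLieAlgebra g]

theorem decompose_lie_of_mem_zero {x : L} (hx : x ∈ g 0) (y : L) (i : A) :
    (DirectSum.decompose g ⁅x, y⁆ i : L) = ⁅x, (DirectSum.decompose g y i : L)⁆ := by
  induction y using DirectSum.Decomposition.inductionOn g with
  | zero => simp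
  | @homogeneous j m =>
    have hxm : ⁅x, (m : L)⁆ ∈ g j := by
      simpa only [zero_add] using SetLike.GradedBracket.bracket_mem hx m.2
    obtain rfl | hij := eq_or_ne j i
    · rw [DirectSum.decompose_of_mem_same g hxm, DirectSum.decompose_of_mem_same g m.2]
    · rw [DirectSum.decompose_of_mem_ne g hxm hij, DirectSum.decompose_of_mem_ne g m.2 hij,
        lie_zero]
  | add a b ha hb =>
    simp only [lie_add, DirectSum.decompose_add, DirectSum.add_apply, Submodule.coe_add, ha, hb]

/-- The projection of a graded Lie algebra onto its piece of degree `i`, as an endomorphism of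
modules over a subalgebra `H` concentrated in degree zero. -/
def gradedProj {H : LieSubalgebra 𝕜 L} (hH : H.toSubmodule ≤ g 0) (i : A) : L →ₗ⁅𝕜, H⁆ L where
  toFun x := DirectSum.decompose g x i
  map_add' x y := by simp
  map_smul' c x := by simp [DirectSum.decompose_smul, DirectSum.smul_apply]
  map_lie' {h x} := decompose_lie_of_mem_zero g (hH h.2) x i

end GradedModule

section Roots

open LieModule LieAlgebra.IsKilling

variable {A 𝕜 L : Type*} [Field 𝕜] [LieRing L] [LieAlgebra 𝕜 L] [FiniteDimensional 𝕜 L]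
  {H : LieSubalgebra 𝕜 L} [H.IsCartanSubalgebra]

theorem not_rootSpace_le {α : Weight 𝕜 H L} (hα : α.IsNonZero) :
    ¬ rootSpace H α ≤ H.toLieSubmodule := by
  rw [← rootSpace_zero_eq 𝕜 L H]
  exact fun hle => α.genWeightSpace_ne_bot' <|
    (disjoint_genWeightSpace 𝕜 H L hα).eq_bot_of_le hle

variable [CharZero 𝕜] [IsKilling 𝕜 L] [IsTriangularizable 𝕜 H L]

theorem exists_lie_ne_zero_of_apply_coroot_eq_neg {α β : Weight 𝕜 H L} (hα : α.IsNonZero)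
    {n : ℕ} (hn : n ≠ 0) (h : β (coroot α) = -n) :
    ∃ x ∈ rootSpace H α, ∃ y ∈ rootSpace H β, ⁅x, y⁆ ≠ 0 := by
  obtain ⟨h', e, f, ht, heα, hfα⟩ := exists_isSl2Triple_of_weight_isNonZero hα
  obtain ⟨y, hy, hy0⟩ := β.exists_ne_zero
  -- If `e` killed `y`, then `y` would be primitive of weight `-n`, which is not a natural number.
  refine ⟨e, heα, y, hy, fun hey => ?_⟩
  have hprim : ht.HasPrimitiveVectorWith y (-n : 𝕜) := by
    refine ⟨hy0, ?_, hey⟩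
    rw [ht.h_eq_coroot hα heα hfα, ← h]
    exact lie_eq_smul_of_mem_rootSpace hy (coroot α)
  obtain ⟨m, hm⟩ := hprim.exists_nat
  have : ((n + m : ℕ) : 𝕜) = 0 := by rw [Nat.cast_add, ← hm, add_neg_cancel]
  exact hn (Nat.add_eq_zero_iff.1 (Nat.cast_eq_zero.1 this)).1

theorem finrank_eq_finrank_add_card_root :
    Module.finrank 𝕜 L = Module.finrank 𝕜 H + Nat.card H.root := by
  classical
  obtain hL | hL := subsingleton_or_nontrivial L
  · have : IsEmpty H.root :=
      ⟨fun α => α.1.exists_ne_zero.elim fun x hx => hx.2 (Subsingleton.elim x 0)⟩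
    simp [Module.finrank_zero_of_subsingleton]
  have hint : DirectSum.IsInternal fun χ : Weight 𝕜 H L => (rootSpace H χ).toSubmodule := by
    rw [DirectSum.isInternal_submodule_iff_iSupIndep_and_iSup_eq_top]
    exact ⟨LieSubmodule.iSupIndep_toSubmodule.2 (iSupIndep_genWeightSpace' 𝕜 H L), by
      simp [← LieSubmodule.iSup_toSubmodule, iSup_genWeightSpace_eq_top' 𝕜 H L]⟩
  have hzero : ({χ | χ.IsZero} : Finset (Weight 𝕜 H L)) = {0} := by
    ext χ
    simp [Weight.isZero_iff_eq_zero]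
  have hroot : ∑ χ ∈ H.root, Module.finrank 𝕜 (rootSpace H χ) = H.root.card :=
    (Finset.sum_congr rfl fun χ hχ => finrank_rootSpace_eq_one χ (by simpa using hχ)).trans
      H.root.card_eq_sum_ones.symm
  calc Module.finrank 𝕜 L = ∑ χ : Weight 𝕜 H L, Module.finrank 𝕜 (rootSpace H χ) := by
        rw [← (LinearEquiv.ofBijective (DirectSum.coeLinearMap _) hint).finrank_eq,
          Module.finrank_directSum]
        rfl
    _ = Module.finrank 𝕜 (rootSpace H (0 : Weight 𝕜 H L)) +
          ∑ χ ∈ H.root, Module.finrank 𝕜 (rootSpace H χ) := by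
        rw [← Finset.sum_filter_add_sum_filter_not _ (fun χ : Weight 𝕜 H L => χ.IsZero), hzero,
          Finset.sum_singleton]
    _ = Module.finrank 𝕜 H + Nat.card H.root := by
        rw [hroot, FunLike.coe_zero, rootSpace_zero_eq, Nat.card_eq_fintype_card, Fintype.card_coe]
        rfl

variable [DecidableEq A] [AddCommMonoid A] {g : A → Submodule 𝕜 L} [GradedLieAlgebra g]

theorem exists_rootSpace_le (hH : H.toSubmodule ≤ g 0) {α : Weight 𝕜 H L} (hα : α.IsNonZero) :
    ∃ i, (rootSpace H α).toSubmodule ≤ g i := by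
  obtain ⟨x, hx, hx0⟩ := α.exists_ne_zero
  obtain ⟨i, hi⟩ : ∃ i, gradedProj g hH i x ≠ 0 := by
    by_contra! h
    refine hx0 ((DirectSum.decompose g).injective (DFinsupp.ext fun i => Subtype.ext ?_))
    rw [DirectSum.decompose_zero]
    exact h i
  have hmem : gradedProj g hH i x ∈ rootSpace H α :=
    map_genWeightSpace_le (gradedProj g hH i) (LieSubmodule.mem_map_of_mem hx)
  refine ⟨i, fun z hz => ?_⟩
  obtain ⟨c, hc⟩ := (finrank_eq_one_iff_of_nonzero' (⟨_, hmem⟩ : rootSpace H α)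
    (Subtype.coe_ne_coe.1 hi)).1 (finrank_rootSpace_eq_one α hα) ⟨z, hz⟩
  rw [← show c • gradedProj g hH i x = z from congrArg Subtype.val hc]
  exact (g i).smul_mem c (SetLike.coe_mem _)

theorem degree_rootSpace_add_degree_neg (hH : H.toSubmodule ≤ g 0) {α : Weight 𝕜 H L}
    (hα : α.IsNonZero) {a b : A} (ha : (rootSpace H α).toSubmodule ≤ g a)
    (hb : (rootSpace H (-α)).toSubmodule ≤ g b) : a + b = 0 := by
  obtain ⟨h, e, f, ht, heα, hfα⟩ := exists_isSl2Triple_of_weight_isNonZero hα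
  have hmem : h ∈ g (a + b) := ht.lie_e_f ▸ SetLike.GradedBracket.bracket_mem (ha heα) (hb hfα)
  refine DirectSum.degree_eq_of_mem_mem g hmem (hH ?_) ht.h_ne_zero
  exact ht.h_eq_coroot hα heα hfα ▸ (coroot α).2

theorem degree_rootSpace_add_of_apply_coroot_eq_neg {α β γ : Weight 𝕜 H L} (hα : α.IsNonZero)
    (hγ : (γ : H → 𝕜) = α + β) {n : ℕ} (hn : n ≠ 0) (h : β (coroot α) = -n) {a b c : A}
    (ha : (rootSpace H α).toSubmodule ≤ g a) (hb : (rootSpace H β).toSubmodule ≤ g b)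
    (hc : (rootSpace H γ).toSubmodule ≤ g c) : c = a + b := by
  obtain ⟨x, hx, y, hy, hxy⟩ := exists_lie_ne_zero_of_apply_coroot_eq_neg hα hn h
  refine DirectSum.degree_eq_of_mem_mem g (hc ?_)
    (SetLike.GradedBracket.bracket_mem (ha hx) (hb hy)) hxy
  exact hγ ▸ lie_mem_genWeightSpace_of_mem_genWeightSpace hx hy

theorem degree_rootSpace_add (hH : H.toSubmodule ≤ g 0) {α β γ : Weight 𝕜 H L}
    (hα : α.IsNonZero) (hγ : (γ : H → 𝕜) = α + β) {a b c : A}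
    (ha : (rootSpace H α).toSubmodule ≤ g a) (hb : (rootSpace H β).toSubmodule ≤ g b)
    (hc : (rootSpace H γ).toSubmodule ≤ g c) : c = a + b := by
  obtain ⟨a', ha'⟩ := exists_rootSpace_le hH hα.neg
  have hneg : a + a' = 0 := degree_rootSpace_add_degree_neg hH hα ha (by simpa using ha')
  have hint := apply_coroot_eq_cast α β
  set m : ℤ := chainBotCoeff α β - chainTopCoeff α β
  -- For `m ≥ 0` no bracket `[g_α, g_β]` is known to be nonzero, but `⟨γ, -α⟩ < 0`, so step back
  -- from `γ` to `β` along `-α` instead.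
  obtain hm | hm := lt_or_ge m 0
  · refine degree_rootSpace_add_of_apply_coroot_eq_neg hα hγ (n := m.natAbs) (by omega) ?_ ha hb hc
    rw [hint, ← Int.cast_natCast, Int.ofNat_natAbs_of_nonpos hm.le, Int.cast_neg, neg_neg]
  · have hβ : (β : H → 𝕜) = ↑(-α) + γ := by simp [hγ]
    have hpair : γ (coroot (-α)) = -((2 + m.natAbs : ℕ) : 𝕜) := by
      have : ((m.natAbs : ℕ) : 𝕜) = m := by rw [← Int.cast_natCast, Int.natAbs_of_nonneg hm]
      simp only [coroot_neg, hγ, map_neg, Pi.add_apply, hint, root_apply_coroot hα]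
      push_cast [this]
      ring
    have hb' := degree_rootSpace_add_of_apply_coroot_eq_neg hα.neg hβ (by omega) hpair ha' hc hb
    rw [hb', ← add_assoc, hneg, zero_add]

theorem isSimplyLaced_rootSystem {g : ZMod 3 → Submodule 𝕜 L} [GradedLieAlgebra g]
    (hH : H.toSubmodule = g 0) : IsSimplyLaced (rootSystem H) := by
  choose d hd using fun α : H.root => exists_rootSpace_le hH.le (H.isNonZero_coe_root α)
  refine isSimplyLaced_of_zmod_three_degree d (fun α hα => ?_) fun α β γ hγ => ?_
  · exact not_rootSpace_le (H.isNonZero_coe_root α) ((hα ▸ hd α).trans hH.ge)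
  · refine degree_rootSpace_add hH.le (H.isNonZero_coe_root α) ?_ (hd α) (hd β) (hd γ)
    simp only [rootSystem_root_apply] at hγ
    exact congrArg DFunLike.coe hγ

theorem finrank_ne_ten_of_graded {g : ZMod 3 → Submodule 𝕜 L} [GradedLieAlgebra g]
    (hH : H.toSubmodule = g 0) : Module.finrank 𝕜 L ≠ 10 := by
  rw [finrank_eq_finrank_add_card_root (H := H), ← Subspace.dual_finrank_eq]
  exact (isSimplyLaced_rootSystem hH).finrank_add_card_ne_ten

end Roots

theorem lie_eq_zero_of_mem_of_mem {R L : Type*} [CommRing R] [LieRing L] [LieAlgebra R L]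
    {H : LieSubalgebra R L} [IsLieAbelian H] {x y : L} (hx : x ∈ H) (hy : y ∈ H) : ⁅x, y⁆ = 0 :=
  congrArg Subtype.val (trivial_lie_zero H H ⟨x, hx⟩ ⟨y, hy⟩)

section Ideal

open LieModule LieAlgebra.IsKilling

variable {𝕜 L : Type*} [Field 𝕜] [LieRing L] [LieAlgebra 𝕜 L] [FiniteDimensional 𝕜 L]
  [IsKilling 𝕜 L]

theorem isKilling_lieIdeal (I : LieIdeal 𝕜 L) : IsKilling 𝕜 I := by
  refine ⟨(LieSubmodule.eq_bot_iff _).2 fun x hx => Subtype.ext ?_⟩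
  refine Submodule.disjoint_def.1 (LieSubmodule.disjoint_toSubmodule.2
    I.isCompl_killingCompl.disjoint) _ x.2 ?_
  rw [LieSubmodule.mem_toSubmodule, LieIdeal.mem_killingCompl]
  intro y hy
  have := (LieIdeal.mem_killingCompl 𝕜 I ⊤).1 hx ⟨y, hy⟩ trivial
  rwa [LieIdeal.killingForm_eq] at this

theorem exists_mem_lie_eq_lie_of_mem_cartan {H : LieSubalgebra 𝕜 L} [H.IsCartanSubalgebra]
    [IsLieAbelian H] (I : LieIdeal 𝕜 L) {h : L} (hh : h ∈ H) :
    ∃ a ∈ I, a ∈ H ∧ ∀ x ∈ I, ⁅x, a⁆ = ⁅x, h⁆ := by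
  have hcompl := LieSubmodule.isCompl_toSubmodule.2 I.isCompl_killingCompl
  obtain ⟨a, ha, b, hb, rfl⟩ := Submodule.mem_sup.1 (hcompl.sup_eq_top ▸ Submodule.mem_top : h ∈ _)
  refine ⟨a, ha, ?_, fun x hx => ?_⟩
  · rw [← LieSubalgebra.IsCartanSubalgebra.self_normalizing (H := H),
      LieSubalgebra.mem_normalizer_iff']
    intro y hy
    have hcomm : ⁅y, a + b⁆ = 0 := lie_eq_zero_of_mem_of_mem hy hh
    rw [lie_add] at hcomm
    have hmem : ⁅y, a⁆ ∈ LieIdeal.killingCompl 𝕜 L I := by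
      rw [eq_neg_of_add_eq_zero_left hcomm]
      exact neg_mem (lie_mem_right 𝕜 L _ y b hb)
    rw [Submodule.disjoint_def.1 hcompl.disjoint _ (lie_mem_right 𝕜 L I y a ha) hmem]
    exact H.zero_mem
  · rw [lie_add, Submodule.disjoint_def.1 hcompl.disjoint ⁅x, b⁆ (lie_mem_left 𝕜 L I x b hx)
      (lie_mem_right 𝕜 L _ x b hb), add_zero]

theorem isCartanSubalgebra_comap_incl {H : LieSubalgebra 𝕜 L} [H.IsCartanSubalgebra]
    [IsLieAbelian H] (I : LieIdeal 𝕜 L) : (H.comap I.incl).IsCartanSubalgebra := by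
  have hab : IsLieAbelian (H.comap I.incl) := ⟨fun x y =>
    Subtype.ext <| Subtype.ext <| lie_eq_zero_of_mem_of_mem x.2 y.2⟩
  refine ⟨inferInstance, le_antisymm (fun x hx => ?_) (LieSubalgebra.le_normalizer _)⟩
  change (x : L) ∈ H
  rw [← LieSubalgebra.IsCartanSubalgebra.self_normalizing (H := H),
    LieSubalgebra.mem_normalizer_iff]
  intro h hh
  obtain ⟨a, haI, haH, ha⟩ := exists_mem_lie_eq_lie_of_mem_cartan I hh
  rw [← ha x x.2]
  exact (LieSubalgebra.mem_normalizer_iff _ _).1 hx ⟨a, haI⟩ haH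

variable [CharZero 𝕜] {H : LieSubalgebra 𝕜 L} [H.IsCartanSubalgebra]

theorem lieIdeal_le_iSup_inf {A : Type*} [DecidableEq A] [AddCommMonoid A]
    {g : A → Submodule 𝕜 L} [GradedLieAlgebra g] [IsTriangularizable 𝕜 H L]
    (hH : H.toSubmodule ≤ g 0) (I : LieIdeal 𝕜 L) :
    I.toSubmodule ≤ ⨆ i, I.toSubmodule ⊓ g i := by
  have hI := congrArg LieSubmodule.toSubmodule
    (lieIdeal_eq_inf_cartan_sup_biSup_rootSpace (H := H) I)
  simp only [LieSubmodule.sup_toSubmodule, LieSubmodule.iSup_toSubmodule] at hI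
  refine hI.trans_le (sup_le ?_ (iSup₂_le fun α hα => ?_))
  · exact le_iSup_of_le 0 (inf_le_inf_left _ hH)
  · obtain ⟨i, hi⟩ := exists_rootSpace_le hH (H.isNonZero_coe_root α)
    exact le_iSup_of_le i (le_inf hα hi)

theorem finrank_lieIdeal_ne_ten [IsAlgClosed 𝕜] {g : ZMod 3 → Submodule 𝕜 L} [GradedLieAlgebra g]
    (hH : H.toSubmodule = g 0) (I : LieIdeal 𝕜 L) : Module.finrank 𝕜 I ≠ 10 := by
  have := isKilling_lieIdeal I
  have := isCartanSubalgebra_comap_incl (H := H) I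
  have hrange : I.incl.toLinearMap.range = I.toSubmodule := Submodule.range_subtype _
  have hint := isInternal_comap (DirectSum.Decomposition.isInternal g)
    (f := I.incl.toLinearMap) Subtype.val_injective (hrange ▸ lieIdeal_le_iSup_inf hH.le I)
  let := gradedLieAlgebraOfIsInternal hint fun i j x hx y hy =>
    SetLike.GradedBracket.bracket_mem (ℒ := g) hx hy
  refine finrank_ne_ten_of_graded (H := H.comap I.incl)
    (g := fun i => (g i).comap I.incl.toLinearMap) ?_
  rw [← hH]
  rfl

end Ideal

section Symplectic

variable {l R : Type*}

/-- The symmetric matrix with prescribed entries, indexed by unordered pairs. -/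
def symMatrixOfSym2 (l R : Type*) [CommRing R] : (Sym2 l → R) →ₗ[R] Matrix l l R where
  toFun f := .of fun i j => f s(i, j)
  map_add' _ _ := rfl
  map_smul' _ _ := rfl

theorem symMatrixOfSym2_injective [CommRing R] : Function.Injective (symMatrixOfSym2 l R) :=
  fun _ _ h => funext <| Sym2.ind fun i j => congrFun₂ h i j

theorem mem_range_symMatrixOfSym2 [CommRing R] {B : Matrix l l R} :
    B ∈ (symMatrixOfSym2 l R).range ↔ B.IsSymm := by
  constructor
  · rintro ⟨f, rfl⟩
    exact Matrix.IsSymm.ext fun i j => congrArg f Sym2.eq_swap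
  · exact fun h => ⟨Sym2.lift ⟨fun i j => B i j, fun i j => h.apply j i⟩, rfl⟩

variable [Fintype l] [DecidableEq l] [CommRing R]

theorem fromBlocks_mem_sp {A B C D : Matrix l l R} :
    Matrix.fromBlocks A B C D ∈ Symplectic.sp l R ↔ B.IsSymm ∧ C.IsSymm ∧ D = -A.transpose := by
  have hJ : Matrix.fromBlocks A B C D ∈ Symplectic.sp l R ↔
      (Matrix.fromBlocks A B C D).transpose * Matrix.J l R =
        Matrix.J l R * -Matrix.fromBlocks A B C D := by
    simp only [Symplectic.sp, mem_skewAdjointMatricesLieSubalgebra,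
      mem_skewAdjointMatricesSubmodule]
    rfl
  simp only [hJ, Matrix.J, Matrix.fromBlocks_transpose, Matrix.fromBlocks_neg,
    Matrix.fromBlocks_multiply, Matrix.fromBlocks_inj, Matrix.IsSymm]
  simp only [mul_zero, zero_mul, mul_one, one_mul, zero_add, add_zero, mul_neg, neg_mul, neg_neg,
    neg_zero, neg_inj]
  constructor
  · rintro ⟨hC, hD, -, hB⟩
    exact ⟨hB, hC, hD.symm⟩
  · rintro ⟨hB, hC, rfl⟩
    simp [hB, hC]

/-- The block matrix with diagonal blocks `A` and `-Aᵀ` and symmetric off-diagonal blocks; this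
parametrizes the symplectic Lie algebra. -/
def spBlocks (l R : Type*) [CommRing R] :
    Matrix l l R × (Sym2 l → R) × (Sym2 l → R) →ₗ[R] Matrix (l ⊕ l) (l ⊕ l) R where
  toFun v :=
    .fromBlocks v.1 (symMatrixOfSym2 l R v.2.1) (symMatrixOfSym2 l R v.2.2) (-v.1.transpose)
  map_add' v w := by simp [Matrix.fromBlocks_add, add_comm]
  map_smul' c v := by simp [Matrix.fromBlocks_smul]

omit [Fintype l] [DecidableEq l] in
theorem spBlocks_injective : Function.Injective (spBlocks l R) := by
  rintro ⟨A, b, c⟩ ⟨A', b', c'⟩ h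
  obtain ⟨hA, hb, hc, -⟩ := Matrix.fromBlocks_inj.1 h
  exact Prod.ext hA (Prod.ext (symMatrixOfSym2_injective hb) (symMatrixOfSym2_injective hc))

theorem range_spBlocks : (spBlocks l R).range = (Symplectic.sp l R : Submodule R _) := by
  ext M
  change _ ↔ M ∈ Symplectic.sp l R
  rw [← M.fromBlocks_toBlocks, fromBlocks_mem_sp,
    ← mem_range_symMatrixOfSym2, ← mem_range_symMatrixOfSym2]
  constructor
  · rintro ⟨v, hv⟩
    obtain ⟨hA, hB, hC, hD⟩ := Matrix.fromBlocks_inj.1 hv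
    exact ⟨⟨_, hB⟩, ⟨_, hC⟩, hA ▸ hD.symm⟩
  · rintro ⟨⟨b, hb⟩, ⟨c, hc⟩, hD⟩
    exact ⟨(M.toBlocks₁₁, b, c), Matrix.fromBlocks_inj.2 ⟨rfl, hb, hc, hD.symm⟩⟩

theorem finrank_sp [Nontrivial R] :
    Module.finrank R (Symplectic.sp l R) = Fintype.card l * (2 * Fintype.card l + 1) := by
  have hle : Module.finrank R (Symplectic.sp l R) = Module.finrank R (spBlocks l R).range := by
    rw [range_spBlocks]
    rfl
  rw [hle, LinearMap.finrank_range_of_inj spBlocks_injective]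
  simp only [Module.finrank_prod, Module.finrank_matrix, Module.finrank_self,
    Module.finrank_fintype_fun_eq_card, Sym2.card]
  rw [Nat.choose_two_right, ← two_mul, Nat.mul_div_cancel' (Nat.even_mul_pred_self _).two_dvd,
    Nat.add_sub_cancel]
  ring

end Symplectic

theorem finrank_ker_snd_comp {𝕜 L S T : Type*} [CommRing 𝕜] [LieRing L] [LieAlgebra 𝕜 L]
    [LieRing S] [LieAlgebra 𝕜 S] [LieRing T] [LieAlgebra 𝕜 T] (e : L ≃ₗ⁅𝕜⁆ S × T) :
    Module.finrank 𝕜 ((LieHom.snd 𝕜 S T).comp e.toLieHom).ker = Module.finrank 𝕜 S := by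
  have hker : ((LieHom.snd 𝕜 S T).comp e.toLieHom).ker.toSubmodule =
      (LinearMap.inl 𝕜 S T).range.map (e.toLinearEquiv.symm : S × T →ₗ[𝕜] L) := by
    rw [← LinearMap.ker_snd, ← Submodule.comap_equiv_eq_map_symm]
    rfl
  change Module.finrank 𝕜 ((LieHom.snd 𝕜 S T).comp e.toLieHom).ker.toSubmodule = _
  rw [hker, LinearEquiv.finrank_map_eq, LinearMap.finrank_range_of_inj LinearMap.inl_injective]

theorem no_B2_component_of_z3_graded_with_cartan_zero_part_general
    {𝕜 L T : Type*} [Field 𝕜] [CharZero 𝕜] [IsAlgClosed 𝕜] [LieRing L] [LieAlgebra 𝕜 L]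
    [FiniteDimensional 𝕜 L] [IsSemisimple 𝕜 L] [LieRing T] [LieAlgebra 𝕜 T]
    (g : ZMod 3 → Submodule 𝕜 L) (hinternal : DirectSum.IsInternal g)
    (hgrad : ∀ i j, ∀ x ∈ g i, ∀ y ∈ g j, ⁅x, y⁆ ∈ g (i + j))
    (K : LieSubalgebra 𝕜 L) (hK : K.toSubmodule = g 0) (hcartan : K.IsCartanSubalgebra) :
    ¬ Nonempty (L ≃ₗ⁅𝕜⁆ Symplectic.sp (Fin 2) 𝕜 × T) := by
  rintro ⟨e⟩
  let := gradedLieAlgebraOfIsInternal hinternal hgrad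
  refine finrank_lieIdeal_ne_ten hK ((LieHom.snd 𝕜 _ T).comp e.toLieHom).ker ?_
  rw [finrank_ker_snd_comp, finrank_sp, Fintype.card_fin]

/-- A finite-dimensional semisimple complex Lie algebra with a `ℤ/3ℤ`-grading whose
degree-zero part is a Cartan subalgebra is not isomorphic to the semisimple Lie algebra
of type `B₂ ⊕ A₂ ⊕ A₁ ⊕ A₁` (realized as `sp₄ × sl₃ × sl₂ × sl₂`): no simple component
of type `B₂` can occur. -/
theorem no_B2_component_of_z3_graded_with_cartan_zero_part
    {L : Type*} [LieRing L] [LieAlgebra ℂ L] [FiniteDimensional ℂ L]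
    [LieAlgebra.IsSemisimple ℂ L]
    (g : ZMod 3 → Submodule ℂ L)
    (hinternal : DirectSum.IsInternal g)
    (hgrad : ∀ i j : ZMod 3, ∀ x ∈ g i, ∀ y ∈ g j, ⁅x, y⁆ ∈ g (i + j))
    (K : LieSubalgebra ℂ L) (hK : (K : Set L) = (g 0 : Set L))
    (hcartan : K.IsCartanSubalgebra) :
    ¬ Nonempty (L ≃ₗ⁅ℂ⁆
      (Symplectic.sp (Fin 2) ℂ ×
        (SpecialLinear.sl (Fin 3) ℂ ×
          (SpecialLinear.sl (Fin 2) ℂ × SpecialLinear.sl (Fin 2) ℂ)))) :=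
  no_B2_component_of_z3_graded_with_cartan_zero_part_general g hinternal hgrad K
    (SetLike.coe_injective hK) hcartan
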